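/- arXiv:1410.8198 — 6 statements merged into one kernel-verified Lean document; each statement's English description precedes it below -/
import Mathlib

section
/- Fix integers k ≥ m ≥ 1 and assume that every admissible k-tuple of distinct integers contains a Dickson m-tuple, i.e., for every admissible k-tuple (x_1,…,x_k) of distinct integers there exist distinct indices i_1,…,i_m ∈ {1,…,k} such that (x_{i_1},…,x_{i_m}) is a Dickson m-tuple. Let R = ∏_{p ≤ k, p prime} p and let φ be Euler's totient function. Then liminf_{x→∞} #{(h_1,…,h_m) ∈ ((−x,x] ∩ ℤ)^m : (h_1,…,h_m) is a Dickson m-tuple} / (2x)^m ≥ (φ(R)/(kR))^m; in particular, a positive proportion of m-tuples of integers are Dickson m-tuples. -/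
open Filter

/-- A `k`-tuple of integers is admissible if for every prime `p` its entries
do not cover all residue classes mod `p`. -/
def AdmissibleTuple {k : ℕ} (x : Fin k → ℤ) : Prop :=
  ∀ p : ℕ, p.Prime → ∃ r : ZMod p, ∀ i, (x i : ZMod p) ≠ r

/-- An `m`-tuple of integers is a Dickson tuple if there are infinitely many `n`
making all of `n + h i` prime. -/
def DicksonTuple {m : ℕ} (h : Fin m → ℤ) : Prop :=
  {n : ℤ | ∀ i, Prime (n + h i)}.Infinite

open Classical in
/-- If every injective `k`-tuple in a finite type has an injectively indexed `m`-subtuple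
satisfying `P`, then many `m`-tuples satisfy `P`. -/
theorem pow_le_card_subtuples {α : Type*} [Fintype α] {m k : ℕ} (P : (Fin m → α) → Prop)
    (h : ∀ x : Fin k ↪ α, ∃ f : Fin m → Fin k, Function.Injective f ∧ P (x ∘ f)) :
    (Fintype.card α + 1 - k) ^ k ≤
      k ^ m * (Nat.card {g // P g} * Fintype.card α ^ (k - m)) := by
  have fiber_le : ∀ f : Fin m → Fin k, Function.Injective f →
      (Finset.univ.filter fun x : Fin k ↪ α => P (x ∘ f)).card ≤
        Nat.card {g // P g} * Fintype.card α ^ (k - m) := by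
    intro f hf
    have hcompl : Fintype.card {j // j ∉ Set.range f} = k - m := by
      rw [Fintype.card_subtype_compl]
      have : Fintype.card {j // j ∈ Set.range f} = m := by
        rw [← Nat.card_eq_fintype_card, Nat.card_range_of_injective hf, Nat.card_fin]
      rw [this, Fintype.card_fin]
    have hinj : Function.Injective
        (fun x : {x : Fin k ↪ α // P (x ∘ f)} =>
          ((⟨x.1 ∘ f, x.2⟩, fun j => x.1 j) :
            {g // P g} × ({j // j ∉ Set.range f} → α))) := by
      rintro ⟨x, hx⟩ ⟨y, hy⟩ hxy
      simp only [Prod.mk.injEq, Subtype.mk.injEq] at hxy ⊢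
      ext j
      by_cases hj : j ∈ Set.range f
      · obtain ⟨i, rfl⟩ := hj
        exact congrFun hxy.1 i
      · exact congrFun hxy.2 ⟨j, hj⟩
    have hcard := Fintype.card_le_of_injective _ hinj
    rw [Fintype.card_prod, Fintype.card_fun, hcompl, Fintype.card_subtype] at hcard
    rwa [Nat.card_eq_fintype_card]
  have hcover : (Finset.univ : Finset (Fin k ↪ α)) ⊆
      (Finset.univ.filter fun f : Fin m → Fin k => Function.Injective f).biUnion
        fun f => Finset.univ.filter fun x : Fin k ↪ α => P (x ∘ f) := by
    intro x _
    obtain ⟨f, hf, hP⟩ := h x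
    simp only [Finset.mem_biUnion, Finset.mem_filter, Finset.mem_univ, true_and]
    exact ⟨f, hf, hP⟩
  calc (Fintype.card α + 1 - k) ^ k ≤ (Fintype.card α).descFactorial k :=
        Nat.pow_sub_le_descFactorial _ _
    _ = (Finset.univ : Finset (Fin k ↪ α)).card := by
        rw [Finset.card_univ, Fintype.card_embedding_eq, Fintype.card_fin]
    _ ≤ _ := Finset.card_le_card hcover
    _ ≤ _ := Finset.card_biUnion_le_card_mul _ _ _ fun f hf =>
        fiber_le f (Finset.mem_filter.1 hf).2
    _ ≤ _ := by
        gcongr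
        refine (Finset.card_filter_le _ _).trans ?_
        simp

/-- A `k`-tuple of integers coprime to every prime `p ≤ k` is admissible. -/
theorem admissibleTuple_of_not_dvd {k : ℕ} (x : Fin k → ℤ)
    (h : ∀ p : ℕ, p.Prime → p ≤ k → ∀ i, ¬ (p : ℤ) ∣ x i) : AdmissibleTuple x := by
  intro p hp
  by_cases hpk : p ≤ k
  · exact ⟨0, fun i hi => h p hp hpk i ((ZMod.intCast_zmod_eq_zero_iff_dvd _ _).1 hi)⟩
  · by_contra! hcon
    have : NeZero p := ⟨hp.ne_zero⟩
    have := Fintype.card_le_of_surjective (fun i => (x i : ZMod p)) hcon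
    rw [ZMod.card, Fintype.card_fin] at this
    exact hpk this

/-- The symmetric interval `(-qR, qR]` contains `2qφ(R)` integers coprime to `R`; they are
parametrized by a block index and a residue. -/
theorem exists_coprime_embedding (R q : ℕ) :
    ∃ e : Fin (2 * q) × ↥((Finset.Ico 1 (1 + R)).filter R.Coprime) → ℤ,
      Function.Injective e ∧ ∀ a, -((q * R : ℕ) : ℤ) < e a ∧ e a ≤ (q * R : ℕ) ∧
        IsCoprime (R : ℤ) (e a) := by
  refine ⟨fun a => ((a.1 : ℕ) - q : ℤ) * R + (a.2 : ℕ), ?_, ?_⟩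
  · rintro ⟨⟨a, ha⟩, ⟨r, hr⟩⟩ ⟨⟨b, hb⟩, ⟨s, hs⟩⟩ hab
    simp only [Finset.mem_filter, Finset.mem_Ico] at hr hs
    simp only at hab
    have hmul : ((a : ℤ) - b) * R = s - r := by linarith
    have hlt : |((a : ℤ) - b)| * R < R := by
      have : |((a : ℤ) - b) * R| < R := by rw [hmul, abs_lt]; omega
      rwa [abs_mul, Nat.abs_cast] at this
    have hzero : |((a : ℤ) - b)| < 1 := by
      by_contra! hge
      nlinarith
    have hab' : (a : ℤ) = b := by
      have := Int.abs_lt_one_iff.1 hzero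
      omega
    have hrs : r = s := by
      rw [hab', sub_self, zero_mul] at hmul
      omega
    have : a = b := by exact_mod_cast hab'
    subst this hrs
    rfl
  · rintro ⟨⟨a, ha⟩, ⟨r, hr⟩⟩
    simp only [Finset.mem_filter, Finset.mem_Ico] at hr
    have ha' : (a : ℤ) + 1 ≤ 2 * q := by exact_mod_cast ha
    have hr1 : (1 : ℤ) ≤ r := by exact_mod_cast hr.1.1
    have hr2 : (r : ℤ) ≤ R := by omega
    have hR : (0 : ℤ) ≤ R := by positivity
    have ha0 : (0 : ℤ) ≤ a := by positivity
    push_cast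
    refine ⟨by nlinarith, by nlinarith, ?_⟩
    have := Nat.isCoprime_iff_coprime.2 hr.2
    simpa [add_comm] using IsCoprime.add_mul_right_right this ((a : ℤ) - q)

/-- The Dickson `m`-tuples with entries in `(-x, x]`. -/
abbrev DicksonTuplesIn (m x : ℕ) : Type :=
  {h : Fin m → ℤ // (∀ i, -(x : ℤ) < h i ∧ h i ≤ x) ∧ DicksonTuple h}

theorem dicksonTuplesIn_finite_and_card_le (m x : ℕ) :
    Finite (DicksonTuplesIn m x) ∧ Nat.card (DicksonTuplesIn m x) ≤ (2 * x) ^ m := by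
  have hinj : Function.Injective (fun h : DicksonTuplesIn m x =>
      (fun i => ⟨h.1 i, Finset.mem_Ioc.2 (h.2.1 i)⟩ :
        Fin m → {n // n ∈ Finset.Ioc (-(x : ℤ)) x})) := by
    intro g h hgh
    ext i
    exact congrArg Subtype.val (congrFun hgh i)
  refine ⟨Finite.of_injective _ hinj, (Nat.card_le_card_of_injective _ hinj).trans_eq ?_⟩
  rw [Nat.card_eq_fintype_card, Fintype.card_fun, Fintype.card_coe, Int.card_Ioc,
    Fintype.card_fin]
  congr 1
  omega

theorem pow_le_card_dicksonTuplesIn {m k R : ℕ}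
    (hR : ∀ p : ℕ, p.Prime → p ≤ k → p ∣ R)
    (hZMT : ∀ x : Fin k → ℤ, Function.Injective x → AdmissibleTuple x →
      ∃ f : Fin m → Fin k, Function.Injective f ∧ DicksonTuple (x ∘ f)) (x : ℕ) :
    (2 * (x / R) * R.totient + 1 - k) ^ k ≤
      k ^ m * (Nat.card (DicksonTuplesIn m x) * (2 * (x / R) * R.totient) ^ (k - m)) := by
  obtain ⟨e, he, hbox⟩ := exists_coprime_embedding R (x / R)
  have hle : ((x / R * R : ℕ) : ℤ) ≤ x := by exact_mod_cast Nat.div_mul_le_self x R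
  have hcard : Fintype.card
      (Fin (2 * (x / R)) × ↥((Finset.Ico 1 (1 + R)).filter R.Coprime)) =
        2 * (x / R) * R.totient := by
    rw [Fintype.card_prod, Fintype.card_fin, Fintype.card_coe,
      Nat.filter_coprime_Ico_eq_totient]
  have key := pow_le_card_subtuples (k := k) (fun g : Fin m → _ => DicksonTuple (e ∘ g))
    fun y => hZMT (e ∘ y) (he.comp y.injective) <| admissibleTuple_of_not_dvd _ <| by
      intro p hp hpk i hdvd
      have hunit := (hbox (y i)).2.2.isUnit_of_dvd' (Int.natCast_dvd_natCast.2 (hR p hp hpk)) hdvd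
      exact hp.one_lt.ne' (by simpa [Int.isUnit_iff_natAbs_eq] using hunit)
  rw [hcard] at key
  refine key.trans ?_
  gcongr
  have := (dicksonTuplesIn_finite_and_card_le m x).1
  refine Nat.card_le_card_of_injective
    (fun g => (⟨e ∘ g.1, fun i => ?_, g.2⟩ : DicksonTuplesIn m x)) ?_
  · obtain ⟨h1, h2, -⟩ := hbox (g.1 i)
    simp only [Function.comp_apply]
    omega
  · intro g h hgh
    exact Subtype.ext (he.comp_left (congrArg Subtype.val hgh))

theorem tendsto_natCast_div_mul_div (R : ℕ) (hR : 0 < R) :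
    Tendsto (fun x : ℕ => ((2 * (x / R) * R.totient : ℕ) : ℝ) / (2 * x)) atTop
      (nhds ((R.totient : ℝ) / R)) := by
  have h := ((tendsto_nat_floor_mul_div_atTop (R := ℝ) (a := (R : ℝ)⁻¹) (by positivity)).comp
    tendsto_natCast_atTop_atTop).mul_const (R.totient : ℝ)
  refine (h.congr fun x => ?_).trans_eq (by rw [inv_mul_eq_div])
  simp only [Function.comp_apply]
  rw [inv_mul_eq_div, Nat.floor_div_eq_div]
  push_cast
  rw [mul_assoc, mul_div_mul_left _ _ two_ne_zero]
  ring

theorem stmt_0 (m k : ℕ) (hm : 1 ≤ m) (hmk : m ≤ k)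
    (hZMT : ∀ x : Fin k → ℤ, Function.Injective x → AdmissibleTuple x →
      ∃ f : Fin m → Fin k, Function.Injective f ∧ DicksonTuple (x ∘ f)) :
    (((∏ p ∈ Finset.filter Nat.Prime (Finset.range (k + 1)), p).totient : ℝ) /
        (k * ∏ p ∈ Finset.filter Nat.Prime (Finset.range (k + 1)), p)) ^ m ≤
      Filter.liminf (fun x : ℕ =>
        (Nat.card {h : Fin m → ℤ // (∀ i, -(x : ℤ) < h i ∧ h i ≤ x) ∧ DicksonTuple h} : ℝ) /
          (2 * x) ^ m) Filter.atTop := by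
  set R := ∏ p ∈ Finset.filter Nat.Prime (Finset.range (k + 1)), p
  have hRpos : 0 < R := Finset.prod_pos fun p hp => (Finset.mem_filter.1 hp).2.pos
  have hdvd : ∀ p : ℕ, p.Prime → p ≤ k → p ∣ R := fun p hp hpk =>
    Finset.dvd_prod_of_mem (fun p => p) (by simp [hp]; omega)
  have hk : (0 : ℝ) < k := by exact_mod_cast (hm.trans hmk)
  have hδ : (0 : ℝ) < (R.totient : ℝ) / R := by
    have := Nat.totient_pos.2 hRpos
    positivity
  have hN := tendsto_natCast_div_mul_div R hRpos
  set N : ℕ → ℕ := fun x => 2 * (x / R) * R.totient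
  have hx : Tendsto (fun x : ℕ => (2 * x : ℝ)) atTop atTop :=
    tendsto_natCast_atTop_atTop.const_mul_atTop two_pos
  have hN' : Tendsto (fun x : ℕ => ((N x : ℝ) + 1 - k) / (2 * x)) atTop
      (nhds ((R.totient : ℝ) / R)) := by
    have := hN.add (hx.const_div_atTop (1 - k : ℝ))
    rw [add_zero] at this
    refine this.congr fun x => ?_
    rw [← add_div, add_sub_assoc]
  have hlim : Tendsto (fun x : ℕ => (((N x : ℝ) + 1 - k) / (2 * x)) ^ k /
      (k ^ m * ((N x : ℝ) / (2 * x)) ^ (k - m))) atTop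
      (nhds (((R.totient : ℝ) / (k * R)) ^ m)) := by
    have := (hN'.pow k).div ((hN.pow (k - m)).const_mul ((k : ℝ) ^ m)) (by positivity)
    refine this.trans_eq ?_
    congr 1
    conv_lhs => rw [← Nat.add_sub_cancel' hmk, pow_add, Nat.add_sub_cancel' hmk]
    rw [mul_div_mul_right _ _ (by positivity), ← div_pow, div_div, mul_comm (R : ℝ)]
  rw [← hlim.liminf_eq]
  refine liminf_le_liminf ?_ hlim.isBoundedUnder_ge ?_
  · filter_upwards [hN.eventually (lt_mem_nhds hδ), hN'.eventually (lt_mem_nhds hδ),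
      eventually_gt_atTop 0] with x hNx hNx' hx0
    have hX : (0 : ℝ) < 2 * x := by positivity
    have hNpos : (0 : ℝ) < N x := (div_pos_iff_of_pos_right hX).1 hNx
    have hNk : k ≤ N x + 1 := by
      have := (div_pos_iff_of_pos_right hX).1 hNx'
      exact_mod_cast (sub_pos.1 this).le
    have key : ((N x : ℝ) + 1 - k) ^ k ≤
        k ^ m * (Nat.card (DicksonTuplesIn m x) * (N x : ℝ) ^ (k - m)) := by
      have hle : (N x + 1 - k) ^ k ≤
          k ^ m * (Nat.card (DicksonTuplesIn m x) * N x ^ (k - m)) :=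
        pow_le_card_dicksonTuplesIn hdvd hZMT x
      have hcast : ((N x + 1 - k : ℕ) : ℝ) = (N x : ℝ) + 1 - k := by
        rw [Nat.cast_sub hNk, Nat.cast_add_one]
      rw [← hcast]
      exact_mod_cast hle
    have hsplit : (2 * x : ℝ) ^ k = (2 * x) ^ m * (2 * x) ^ (k - m) := by
      rw [← pow_add, Nat.add_sub_cancel' hmk]
    rw [div_le_div_iff₀ (by positivity) (by positivity), div_pow, div_pow, hsplit]
    calc ((N x : ℝ) + 1 - k) ^ k / ((2 * x) ^ m * (2 * x) ^ (k - m)) * (2 * x) ^ m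
        = ((N x : ℝ) + 1 - k) ^ k / (2 * x) ^ (k - m) := by field_simp
      _ ≤ k ^ m * (Nat.card (DicksonTuplesIn m x) * (N x : ℝ) ^ (k - m)) /
          (2 * x) ^ (k - m) := by gcongr
      _ = _ := by ring
  · refine IsBoundedUnder.isCoboundedUnder_ge ⟨1, ?_⟩
    rw [eventually_map]
    filter_upwards with x
    refine div_le_one_of_le₀ ?_ (by positivity)
    exact_mod_cast (dicksonTuplesIn_finite_and_card_le m x).2
end

section
/- Let S be a finite set and let k, m be integers with |S| ≥ k ≥ m ≥ 1. Let D be a family of m-element subsets of S, and suppose that every k-element subset of S contains at least one member of D. Then the number T of members of D satisfies T · C(|S|−m, k−m) ≥ C(|S|, k), and consequently T ≥ (|S|/k)^m, where C(n,r) denotes the binomial coefficient. -/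
theorem Nat.pow_mul_descFactorial_le {k n : ℕ} (hkn : k ≤ n) (m : ℕ) :
    n ^ m * k.descFactorial m ≤ k ^ m * n.descFactorial m := by
  induction m with
  | zero => simp
  | succ m ih =>
    have hstep : n * (k - m) ≤ k * (n - m) := by
      rw [Nat.mul_sub, Nat.mul_sub, Nat.mul_comm n k]
      exact Nat.sub_le_sub_left (Nat.mul_le_mul_right m hkn) _
    calc n ^ (m + 1) * k.descFactorial (m + 1)
        = (n * (k - m)) * (n ^ m * k.descFactorial m) := by
          rw [Nat.descFactorial_succ]; ring
      _ ≤ (k * (n - m)) * (k ^ m * n.descFactorial m) := Nat.mul_le_mul hstep ih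
      _ = k ^ (m + 1) * n.descFactorial (m + 1) := by
          rw [Nat.descFactorial_succ]; ring

theorem Nat.pow_mul_choose_le {k n : ℕ} (hkn : k ≤ n) (m : ℕ) :
    n ^ m * k.choose m ≤ k ^ m * n.choose m := by
  have h := Nat.pow_mul_descFactorial_le hkn m
  rw [Nat.descFactorial_eq_factorial_mul_choose, Nat.descFactorial_eq_factorial_mul_choose,
    Nat.mul_left_comm, Nat.mul_left_comm (k ^ m)] at h
  exact Nat.le_of_mul_le_mul_left h m.factorial_pos

theorem Finset.card_filter_superset_powersetCard_le {α : Type*} [DecidableEq α]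
    {S d : Finset α} (hd : d ⊆ S) (k : ℕ) :
    ((S.powersetCard k).filter (d ⊆ ·)).card ≤ (S.card - d.card).choose (k - d.card) := by
  rw [← Finset.card_sdiff_of_subset hd, ← Finset.card_powersetCard]
  refine Finset.card_le_card_of_injOn (· \ d) (fun K hK => ?_) (fun K hK L hL h => ?_)
  · simp only [Finset.coe_filter, Finset.mem_powersetCard, Set.mem_ofPred_eq] at hK
    obtain ⟨⟨hKS, hKk⟩, hdK⟩ := hK
    simp only [Finset.mem_coe, Finset.mem_powersetCard]
    exact ⟨Finset.sdiff_subset_sdiff hKS subset_rfl,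
      by rw [Finset.card_sdiff_of_subset hdK, hKk]⟩
  · simp only [Finset.coe_filter, Set.mem_ofPred_eq] at hK hL
    rw [← Finset.sdiff_union_of_subset hK.2, ← Finset.sdiff_union_of_subset hL.2]
    exact congrArg (· ∪ d) h

theorem stmt_2 {α : Type*} [DecidableEq α] (S : Finset α) (k m : ℕ)
    (hm : 1 ≤ m) (hmk : m ≤ k) (hkS : k ≤ S.card)
    (D : Finset (Finset α))
    (hD : ∀ d ∈ D, d ⊆ S ∧ d.card = m)
    (hcover : ∀ K ⊆ S, K.card = k → ∃ d ∈ D, d ⊆ K) :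
    Nat.choose S.card k ≤ D.card * Nat.choose (S.card - m) (k - m) ∧
      ((S.card : ℝ) / k) ^ m ≤ D.card := by
  have hcount : S.card.choose k ≤ D.card * (S.card - m).choose (k - m) := by
    rw [← Finset.card_powersetCard]
    have hsub : S.powersetCard k ⊆ D.biUnion fun d => (S.powersetCard k).filter (d ⊆ ·) := by
      intro K hK
      obtain ⟨hKS, hKk⟩ := Finset.mem_powersetCard.mp hK
      obtain ⟨d, hd, hdK⟩ := hcover K hKS hKk
      exact Finset.mem_biUnion.mpr ⟨d, hd, Finset.mem_filter.mpr ⟨hK, hdK⟩⟩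
    refine (Finset.card_le_card hsub).trans (Finset.card_biUnion_le_card_mul _ _ _ fun d hd => ?_)
    obtain ⟨hdS, rfl⟩ := hD d hd
    exact Finset.card_filter_superset_powersetCard_le hdS k
  refine ⟨hcount, ?_⟩
  have hchoose : S.card.choose m ≤ D.card * k.choose m := by
    refine Nat.le_of_mul_le_mul_right ?_
      (Nat.choose_pos (Nat.sub_le_sub_right hkS m) : 0 < (S.card - m).choose (k - m))
    calc S.card.choose m * (S.card - m).choose (k - m)
        = S.card.choose k * k.choose m := (Nat.choose_mul hmk).symm
      _ ≤ D.card * (S.card - m).choose (k - m) * k.choose m := Nat.mul_le_mul_right _ hcount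
      _ = D.card * k.choose m * (S.card - m).choose (k - m) := Nat.mul_right_comm _ _ _
  have hpow : S.card ^ m ≤ D.card * k ^ m := by
    refine Nat.le_of_mul_le_mul_right ?_ (Nat.choose_pos hmk)
    calc S.card ^ m * k.choose m ≤ k ^ m * S.card.choose m := Nat.pow_mul_choose_le hkS m
      _ ≤ k ^ m * (D.card * k.choose m) := Nat.mul_le_mul_left _ hchoose
      _ = D.card * k ^ m * k.choose m := by ring
  have hk : (0 : ℝ) < k := by exact_mod_cast hm.trans hmk
  rw [div_pow, div_le_iff₀ (pow_pos hk m)]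
  exact_mod_cast hpow
end

section
/- There is an absolute constant C > 0 such that for all integers k ≥ m ≥ 2, δ(m,k) ≤ (log 2m)^{Cm} / ((k/m) · log log(3k/m))^{m−1}. -/
open Filter Real

/-- An `(m,k)`-plausible set: translation invariant, permutation invariant, and
every admissible `k`-tuple of distinct integers contains an `m`-subtuple lying in `A`. -/
def Plausible (m k : ℕ) (A : Set (Fin m → ℤ)) : Prop :=
  (∀ h ∈ A, ∀ t : ℤ, (fun i => h i + t) ∈ A) ∧
  (∀ h ∈ A, ∀ σ : Equiv.Perm (Fin m), (h ∘ σ) ∈ A) ∧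
  (∀ x : Fin k → ℤ, Function.Injective x → AdmissibleTuple x →
    ∃ f : Fin m → Fin k, Function.Injective f ∧ (x ∘ f) ∈ A)

/-- The number of points of `A` in the box `[-N, N]^m`. -/
noncomputable def boxCount (m : ℕ) (A : Set (Fin m → ℤ)) (N : ℕ) : ℕ :=
  Nat.card {h : Fin m → ℤ // h ∈ A ∧ ∀ i, |h i| ≤ (N : ℤ)}

/-- The liminf density of `A ⊆ ℤ^m` in boxes `[-N, N]^m`. -/
noncomputable def lowerBoxDensity (m : ℕ) (A : Set (Fin m → ℤ)) : ℝ :=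
  Filter.liminf (fun N : ℕ => (boxCount m A N : ℝ) / (2 * N) ^ m) Filter.atTop

/-- `δ(m,k)`: the infimum over `(m,k)`-plausible sets `A` of the liminf density of `A`. -/
noncomputable def delta (m k : ℕ) : ℝ :=
  sInf { d : ℝ | ∃ A : Set (Fin m → ℤ), Plausible m k A ∧ d = lowerBoxDensity m A }

/-- The integer `m`-tuples all of whose entries are congruent modulo `q`. -/
def congruentTuples (m q : ℕ) : Set (Fin m → ℤ) :=
  {h | ∀ i j, h i ≡ h j [ZMOD q]}

/-- An admissible tuple can be translated so that all its entries become coprime to `P`. -/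
lemma AdmissibleTuple.exists_forall_gcd_eq_one {k : ℕ} {x : Fin k → ℤ} (hx : AdmissibleTuple x)
    {P : ℕ} (hP : P ≠ 0) : ∃ c : ℤ, ∀ i, Int.gcd (x i - c) P = 1 := by
  choose! r hr using hx
  let c := Nat.chineseRemainderOfFinset (fun p => (r p).val) (fun p => p) P.primeFactors
    (fun p hp => (Nat.prime_of_mem_primeFactors hp).ne_zero)
    (fun p hp q hq hpq => (Nat.coprime_primes (Nat.prime_of_mem_primeFactors hp)
      (Nat.prime_of_mem_primeFactors hq)).2 hpq)
  refine ⟨(c : ℕ), fun i => ?_⟩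
  by_contra hne
  obtain ⟨p, hp, hdvd⟩ := Nat.exists_prime_and_dvd hne
  have : NeZero p := ⟨hp.ne_zero⟩
  have hpx : (p : ℤ) ∣ x i - (c : ℕ) := (Int.natCast_dvd_natCast.2 hdvd).trans (Int.gcd_dvd_left ..)
  have hpP : p ∣ P :=
    Int.natCast_dvd_natCast.1 ((Int.natCast_dvd_natCast.2 hdvd).trans (Int.gcd_dvd_right ..))
  have hc := c.2 p (Nat.mem_primeFactors.2 ⟨hp, hpP, hP⟩)
  have hcr : ((c : ℕ) : ZMod p) = r p := by
    rw [(ZMod.natCast_eq_natCast_iff _ _ _).2 hc, ZMod.natCast_zmod_val]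
  apply hr p hp i
  rw [← hcr, ← sub_eq_zero]
  have := (ZMod.intCast_zmod_eq_zero_iff_dvd (x i - (c : ℕ)) p).2 hpx
  simpa using this

/-- An admissible tuple meets at most `φ(P) r` residue classes modulo `P r`, so if it is long
enough then `m` of its entries are congruent modulo `P r`. -/
lemma plausible_congruentTuples {m k P r : ℕ} (hP : 0 < P) (hr : 0 < r)
    (hk : P.totient * r * (m - 1) < k) : Plausible m k (congruentTuples m (P * r)) := by
  refine ⟨fun h hh t i j => (hh i j).add_right t, fun h hh σ i j => hh _ _, fun x _ hx => ?_⟩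
  obtain ⟨c, hc⟩ := hx.exists_forall_gcd_eq_one hP.ne'
  have hP0 : (P : ℤ) ≠ 0 := by exact_mod_cast hP.ne'
  have hr0 : (r : ℤ) ≠ 0 := by exact_mod_cast hr.ne'
  let g : Fin k → ℕ × ℕ := fun i =>
    (((x i - c) % P).toNat, (((x i - c) / P) % r).toNat)
  have hg1 (i : Fin k) : ((g i).1 : ℤ) = (x i - c) % P :=
    Int.toNat_of_nonneg (Int.emod_nonneg _ hP0)
  have hg2 (i : Fin k) : ((g i).2 : ℤ) = (x i - c) / P % r :=
    Int.toNat_of_nonneg (Int.emod_nonneg _ hr0)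
  obtain ⟨y, -, hy⟩ := Finset.exists_lt_card_fiber_of_mul_lt_card_of_maps_to
    (s := Finset.univ) (f := g) (n := m - 1)
    (t := ((Finset.range P).filter P.Coprime) ×ˢ Finset.range r)
    (fun i _ => by
      rw [Finset.mem_product, Finset.mem_filter, Finset.mem_range, Finset.mem_range]
      refine ⟨⟨?_, ?_⟩, ?_⟩
      · have := Int.emod_lt_of_pos (x i - c) (b := P) (by exact_mod_cast hP)
        rw [← hg1] at this
        exact_mod_cast this
      · have h1 : Int.gcd ((x i - c) % P) P = 1 := by rw [Int.gcd_emod, hc i]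
        rw [← hg1, Int.gcd_natCast_natCast] at h1
        exact Nat.Coprime.symm h1
      · have := Int.emod_lt_of_pos ((x i - c) / P) (b := r) (by exact_mod_cast hr)
        rw [← hg2] at this
        exact_mod_cast this)
    (by
      rw [Finset.card_product, Finset.card_range, Finset.card_univ, Fintype.card_fin]
      exact hk)
  have hcard : Fintype.card (Fin m) ≤ (Finset.univ.filter fun i => g i = y).card := by
    rw [Fintype.card_fin]
    omega
  obtain ⟨f⟩ := Function.Embedding.nonempty_of_card_le (α := Fin m)
    (β := {i // i ∈ Finset.univ.filter fun i => g i = y}) (by rwa [Fintype.card_coe])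
  refine ⟨fun i => f i, fun i j hij => f.injective (Subtype.ext hij), fun i j => ?_⟩
  have hmod (a : Fin k) (ha : g a = y) : x a ≡ c + (P * y.2 + y.1) [ZMOD (P * r : ℕ)] := by
    rw [← ha, hg1, hg2]
    apply Int.ModEq.symm
    rw [Int.modEq_iff_dvd]
    refine ⟨(x a - c) / P / r, ?_⟩
    have e1 := Int.emod_add_mul_ediv (x a - c) P
    have e2 := Int.emod_add_mul_ediv ((x a - c) / P) r
    push_cast
    linear_combination -e1 - (P : ℤ) * e2
  have hi := (Finset.mem_filter.1 (f i).2).2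
  have hj := (Finset.mem_filter.1 (f j).2).2
  exact (hmod _ hi).trans (hmod _ hj).symm

lemma boxCount_congruentTuples_le {m q : ℕ} (hm : 0 < m) (hq : 0 < q) (N : ℕ) :
    boxCount m (congruentTuples m q) N ≤ q * (2 * (N / q) + 2) ^ m := by
  have hq' : (0 : ℤ) < q := by exact_mod_cast hq
  let z : Fin m := ⟨0, hm⟩
  let T : Finset (ℤ × (Fin m → ℤ)) :=
    Finset.Ico (0 : ℤ) q ×ˢ
      Fintype.piFinset fun _ : Fin m => Finset.Icc (-((N / q : ℕ) : ℤ) - 1) ((N / q : ℕ) : ℤ)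
  have hT : T.card = q * (2 * (N / q) + 2) ^ m := by
    rw [Finset.card_product, Fintype.card_piFinset_const, Int.card_Ico, Int.card_Icc]
    congr 2
    omega
  rw [← hT, ← Nat.card_eq_finsetCard T, boxCount]
  refine Nat.card_le_card_of_injective
    (fun h => (⟨(h.1 z % q, fun i => h.1 i / q), ?_⟩ : {a // a ∈ T})) ?_
  · simp only [T, Finset.mem_product, Finset.mem_Ico, Fintype.mem_piFinset, Finset.mem_Icc]
    refine ⟨⟨Int.emod_nonneg _ hq'.ne', Int.emod_lt_of_pos _ hq'⟩, fun i => ?_⟩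
    have hi := abs_le.1 (h.2.2 i)
    push_cast
    constructor
    · rw [Int.le_ediv_iff_mul_le hq']
      have e1 := Int.emod_add_mul_ediv (N : ℤ) q
      have e2 := Int.emod_lt_of_pos (N : ℤ) hq'
      linarith
    · exact Int.ediv_le_ediv hq' hi.2
  · rintro ⟨h, hA, hN⟩ ⟨h', hA', hN'⟩ heq
    simp only [Subtype.mk.injEq, Prod.mk.injEq] at heq
    apply Subtype.ext
    funext i
    have e1 := Int.emod_add_mul_ediv (h i) q
    have e2 := Int.emod_add_mul_ediv (h' i) q
    have e3 : h i % q = h' i % q :=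
      (hA i z).trans (heq.1.trans (hA' z i))
    have e4 := congrFun heq.2 i
    show h i = h' i
    rw [← e1, ← e2, e3, e4]

lemma lowerBoxDensity_congruentTuples_le {m q : ℕ} (hm : 0 < m) (hq : 0 < q) :
    lowerBoxDensity m (congruentTuples m q) ≤ 1 / (q : ℝ) ^ (m - 1) := by
  have hq' : (0 : ℝ) < q := by exact_mod_cast hq
  have hlim : Tendsto (fun N : ℕ => (q : ℝ) * (1 / q + 1 / (N : ℝ)) ^ m) atTop
      (nhds (1 / (q : ℝ) ^ (m - 1))) := by
    have h1 := (((tendsto_one_div_atTop_nhds_zero_nat (𝕜 := ℝ)).const_add (1 / (q : ℝ))).pow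
      m).const_mul (q : ℝ)
    convert h1 using 2
    obtain ⟨n, rfl⟩ := Nat.exists_eq_succ_of_ne_zero hm.ne'
    simp only [Nat.succ_eq_add_one, Nat.add_sub_cancel]
    rw [add_zero, one_div_pow, pow_succ]
    field_simp
  rw [← hlim.liminf_eq]
  refine liminf_le_liminf ?_ ?_ hlim.isCoboundedUnder_ge
  · filter_upwards [eventually_gt_atTop 0] with N hN
    have hN' : (0 : ℝ) < N := by exact_mod_cast hN
    rw [div_le_iff₀ (by positivity), mul_assoc, ← mul_pow]
    have hc : (boxCount m (congruentTuples m q) N : ℝ) ≤ q * (2 * ((N / q : ℕ) : ℝ) + 2) ^ m := by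
      exact_mod_cast boxCount_congruentTuples_le hm hq N
    refine hc.trans ?_
    have e : (1 / (q : ℝ) + 1 / N) * (2 * N) = 2 * (N / q) + 2 := by field_simp
    rw [e]
    gcongr
    exact Nat.cast_div_le
  · exact isBoundedUnder_of ⟨0, fun N => by positivity⟩

lemma lowerBoxDensity_nonneg (m : ℕ) (A : Set (Fin m → ℤ)) : 0 ≤ lowerBoxDensity m A := by
  rw [lowerBoxDensity, liminf_eq]
  by_cases hb : BddAbove {a : ℝ | ∀ᶠ N : ℕ in atTop, a ≤ (boxCount m A N : ℝ) / (2 * N) ^ m}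
  · exact le_csSup hb (Eventually.of_forall fun N => by positivity)
  · rw [Real.sSup_of_not_bddAbove hb]

lemma delta_le_of_plausible {m k : ℕ} {A : Set (Fin m → ℤ)} (hA : Plausible m k A) :
    delta m k ≤ lowerBoxDensity m A := by
  refine csInf_le ⟨0, ?_⟩ ⟨A, hA, rfl⟩
  rintro _ ⟨B, -, rfl⟩
  exact lowerBoxDensity_nonneg m B

lemma log_mul_totient_primorial_le (n : ℕ) :
    Real.log (n + 1) * (primorial n).totient ≤ primorial n := by
  let f : ℕ →* ℝ :=
    { toFun := fun n => (n : ℝ)⁻¹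
      map_one' := by simp
      map_mul' := fun a b => by push_cast; rw [mul_inv] }
  have hf (p : ℕ) : f p = (p : ℝ)⁻¹ := rfl
  have hsum := (EulerProduct.summable_and_hasSum_smoothNumbers_prod_primesBelow_geometric (f := f)
    (fun {p} hp => by
      rw [hf, norm_inv, Real.norm_natCast]
      exact inv_lt_one_of_one_lt₀ (by exact_mod_cast hp.one_lt)) (n + 1)).2
  have hmem (i : Fin n) : (i : ℕ) + 1 ∈ (n + 1).smoothNumbers :=
    Nat.mem_smoothNumbers'.2 fun p _ hd => by
      have := Nat.le_of_dvd (Nat.succ_pos _) hd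
      omega
  let e : Fin n ↪ (n + 1).smoothNumbers :=
    ⟨fun i => ⟨i + 1, hmem i⟩, fun i j hij => by
      have := congrArg Subtype.val hij
      simp only at this
      exact Fin.ext (by omega)⟩
  have hle : Real.log (n + 1) ≤ ∏ p ∈ (n + 1).primesBelow, (1 - f p)⁻¹ := by
    have h1 := sum_le_hasSum (Finset.univ.map e) (fun i _ => by rw [hf]; positivity) hsum
    rw [Finset.sum_map] at h1
    have h2 := log_add_one_le_harmonic n
    rw [harmonic, Finset.sum_range] at h2
    push_cast at h2
    refine h2.trans (le_trans (le_of_eq ?_) h1)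
    refine Finset.sum_congr rfl fun i _ => ?_
    rw [hf, show ((e i : (n + 1).smoothNumbers) : ℕ) = i + 1 from rfl, Nat.cast_add_one]
  have htot : ((primorial n).totient : ℝ) =
      primorial n * ∏ p ∈ (n + 1).primesBelow, (1 - f p) := by
    have h := Nat.totient_eq_mul_prod_factors (primorial n)
    rw [primeFactors_primorial] at h
    have h' := congrArg (Rat.cast : ℚ → ℝ) h
    push_cast at h'
    exact h'
  have hpos : 0 < ∏ p ∈ (n + 1).primesBelow, (1 - f p) :=
    Finset.prod_pos fun p hp => by
      rw [hf, sub_pos]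
      exact inv_lt_one_of_one_lt₀ (by exact_mod_cast (Nat.prime_of_mem_primesBelow hp).one_lt)
  rw [Finset.prod_inv_distrib] at hle
  calc Real.log (n + 1) * (primorial n).totient
      ≤ (∏ p ∈ (n + 1).primesBelow, (1 - f p))⁻¹ * (primorial n).totient := by gcongr
    _ = primorial n := by rw [htot]; field_simp

/-- There is a modulus `P r` for which `φ(P) r ≤ k / m`, while `P r` exceeds `k / m` by a factor
of order `log log (3 k / m)`. -/
lemma exists_modulus {m k : ℕ} (hm : 0 < m) (hmk : m ≤ k) :
    ∃ P r : ℕ, 0 < P ∧ 0 < r ∧ P.totient * r * m ≤ k ∧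
      (k / m : ℝ) * Real.log (Real.log (3 * k / m)) ≤ 6 * (P * r : ℕ) := by
  obtain ⟨n, hn⟩ : ∃ n, n = Nat.log 4 (k / m) := ⟨_, rfl⟩
  obtain ⟨F, hF⟩ : ∃ F, F = (primorial n).totient := ⟨_, rfl⟩
  have hP := primorial_pos n
  have hF0 : 0 < F := hF ▸ Nat.totient_pos.2 hP
  have hFP : F ≤ primorial n := hF ▸ Nat.totient_le _
  have hkm : k / m ≠ 0 := (Nat.div_pos hmk hm).ne'
  have hFk : F * m ≤ k := by
    have h1 : 4 ^ n ≤ k / m := hn ▸ Nat.pow_log_le_self 4 hkm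
    exact (Nat.le_div_iff_mul_le hm).1 (hFP.trans ((primorial_le_four_pow n).trans h1))
  have hFm : 0 < F * m := Nat.mul_pos hF0 hm
  obtain ⟨r, hr⟩ : ∃ r, r = k / (F * m) := ⟨_, rfl⟩
  have hr0 : 0 < r := hr ▸ Nat.div_pos hFk hFm
  have hrk : F * r * m ≤ k := by
    have := Nat.mul_div_le k (F * m)
    rw [← hr] at this
    linarith
  refine ⟨primorial n, r, hP, hr0, hF ▸ hrk, ?_⟩
  have hm' : (0 : ℝ) < m := by exact_mod_cast hm
  have hX1 : (1 : ℝ) ≤ k / m := by rw [one_le_div hm']; exact_mod_cast hmk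
  have hk2 : (k : ℝ) / m ≤ 2 * (F * r) := by
    have h1 : k < F * m * (r + 1) := by
      rw [hr]; exact Nat.lt_mul_div_succ k hFm
    have h2 : k ≤ 2 * (F * r) * m := by nlinarith
    rw [div_le_iff₀ hm']
    exact_mod_cast h2
  have hX4 : (k : ℝ) / m ≤ 4 ^ (n + 1) := by
    have h1 : k / m < 4 ^ (n + 1) := hn ▸ Nat.lt_pow_succ_log_self (by norm_num) _
    have h2 : k < 4 ^ (n + 1) * m := (Nat.div_lt_iff_lt_mul hm).1 h1
    rw [div_le_iff₀ hm']
    exact_mod_cast h2.le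
  have hlog2 := Real.log_two_lt_d9
  have hexp := Real.exp_one_gt_d9
  have hlog3 : Real.log 3 ≤ 1.2 := by
    rw [Real.log_le_iff_le_exp (by norm_num)]
    have : (3 : ℝ) ≤ 2.7 * (0.2 + 1) := by norm_num
    rw [show (1.2 : ℝ) = 1 + 0.2 by norm_num, Real.exp_add]
    have h2 := Real.add_one_le_exp (0.2 : ℝ)
    nlinarith
  have hlog3' : 1 < Real.log 3 := by
    rw [Real.lt_log_iff_exp_lt (by norm_num)]
    linarith [Real.exp_one_lt_d9]
  have h3X : 3 * (k : ℝ) / m = 3 * (k / m) := mul_div_assoc ..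
  have hL : Real.log (3 * k / m) ≤ 3 * (n + 1) := by
    rw [h3X, Real.log_mul (by norm_num) (by positivity)]
    have h1 := Real.log_le_log (by positivity) hX4
    rw [Real.log_pow, show (4 : ℝ) = 2 ^ 2 by norm_num, Real.log_pow] at h1
    push_cast at h1
    nlinarith [(Nat.cast_nonneg n : (0 : ℝ) ≤ n)]
  have hL1 : 1 < Real.log (3 * k / m) := by
    rw [h3X]
    exact hlog3'.trans_le (Real.log_le_log (by norm_num) (by linarith))
  have hLL : Real.log (Real.log (3 * k / m)) ≤ 2 + Real.log (n + 1) := by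
    have h1 := Real.log_le_log (by linarith) hL
    rw [Real.log_mul (by norm_num) (by positivity)] at h1
    linarith
  have hlogF : Real.log (n + 1) * F ≤ primorial n := hF ▸ log_mul_totient_primorial_le n
  have hFP' : (F : ℝ) ≤ primorial n := by exact_mod_cast hFP
  calc (k / m : ℝ) * Real.log (Real.log (3 * k / m))
      ≤ 2 * (F * r) * (2 + Real.log (n + 1)) :=
        mul_le_mul hk2 hLL (Real.log_pos hL1).le (by positivity)
    _ = 2 * (2 * F + Real.log (n + 1) * F) * r := by ring
    _ ≤ 2 * (2 * primorial n + primorial n) * r := by gcongr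
    _ = 6 * (primorial n * r : ℕ) := by push_cast; ring

theorem stmt_4 : ∃ C : ℝ, 0 < C ∧ ∀ m k : ℕ, 2 ≤ m → m ≤ k →
    delta m k ≤ (Real.log (2 * m)) ^ (C * m) /
        ((k / m : ℝ) * Real.log (Real.log (3 * k / m))) ^ (m - 1) := by
  refine ⟨10, by norm_num, fun m k hm hmk => ?_⟩
  have hm0 : 0 < m := by omega
  obtain ⟨P, r, hP, hr, hk, hD⟩ := exists_modulus hm0 hmk
  have hq : 0 < P * r := Nat.mul_pos hP hr
  have hlt : P.totient * r * (m - 1) < k :=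
    lt_of_lt_of_le (Nat.mul_lt_mul_of_pos_left (by omega)
      (Nat.mul_pos (Nat.totient_pos.2 hP) hr)) hk
  refine (delta_le_of_plausible (plausible_congruentTuples hP hr hlt)).trans
    ((lowerBoxDensity_congruentTuples_le hm0 hq).trans ?_)
  have hm' : (2 : ℝ) ≤ m := by exact_mod_cast hm
  have hX1 : (1 : ℝ) ≤ k / m := by rw [one_le_div (by linarith)]; exact_mod_cast hmk
  have hLL : 0 < Real.log (Real.log (3 * k / m)) := by
    refine Real.log_pos ?_
    rw [mul_div_assoc, Real.lt_log_iff_exp_lt (by linarith)]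
    linarith [Real.exp_one_lt_d9]
  have hlog : (1.25 : ℝ) ≤ Real.log (2 * m) := by
    have h1 : Real.log (2 ^ 2) ≤ Real.log (2 * m) := Real.log_le_log (by norm_num) (by linarith)
    rw [Real.log_pow] at h1
    push_cast at h1
    linarith [Real.log_two_gt_d9]
  have hnum : (6 : ℝ) ^ (m - 1) ≤ Real.log (2 * m) ^ ((10 : ℝ) * m) := by
    rw [Real.rpow_mul_natCast (by linarith)]
    have h6 : (6 : ℝ) ≤ Real.log (2 * m) ^ (10 : ℝ) := by
      rw [show (10 : ℝ) = (10 : ℕ) by norm_num, Real.rpow_natCast]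
      calc (6 : ℝ) ≤ 1.25 ^ 10 := by norm_num
        _ ≤ _ := by gcongr
    calc (6 : ℝ) ^ (m - 1) ≤ 6 ^ m := pow_le_pow_right₀ (by norm_num) (by omega)
      _ ≤ _ := by gcongr
  have hq' : (0 : ℝ) < (P * r : ℕ) := by exact_mod_cast hq
  rw [div_le_div_iff₀ (by positivity) (by positivity), one_mul]
  calc ((k / m : ℝ) * Real.log (Real.log (3 * k / m))) ^ (m - 1)
      ≤ (6 * (P * r : ℕ)) ^ (m - 1) := by gcongr
    _ = 6 ^ (m - 1) * ((P * r : ℕ) : ℝ) ^ (m - 1) := mul_pow ..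
    _ ≤ _ := by gcongr
end

section
/- δ(2,50) ≤ 1/210. -/
open Filter Real

/-- Pairs of integers congruent modulo `210`. -/
def congruentPairs : Set (Fin 2 → ℤ) := {h | (210 : ℤ) ∣ h 0 - h 1}

/-- An admissible tuple with more than `48 = φ(210)` entries has two entries congruent
modulo `210`. -/
lemma AdmissibleTuple.exists_ne_dvd_sub {k : ℕ} (hk : 48 < k) {x : Fin k → ℤ}
    (hx : AdmissibleTuple x) : ∃ i j, i ≠ j ∧ (210 : ℤ) ∣ x i - x j := by
  obtain ⟨a, ha⟩ := hx 2 (by norm_num)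
  obtain ⟨b, hb⟩ := hx 3 (by norm_num)
  obtain ⟨c, hc⟩ := hx 5 (by norm_num)
  obtain ⟨d, hd⟩ := hx 7 (by norm_num)
  let T : Finset (ZMod 2 × ZMod 3 × ZMod 5 × ZMod 7) :=
    (Finset.univ.erase a) ×ˢ (Finset.univ.erase b) ×ˢ (Finset.univ.erase c) ×ˢ
      (Finset.univ.erase d)
  have hT : T.card = 48 := by
    simp [T, Finset.card_product, Finset.card_erase_of_mem, ZMod.card]
  obtain ⟨i, -, j, -, hij, h⟩ := Finset.exists_ne_map_eq_of_card_lt_of_maps_to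
    (s := (Finset.univ : Finset (Fin k))) (t := T)
    (f := fun i => ((x i : ZMod 2), (x i : ZMod 3), (x i : ZMod 5), (x i : ZMod 7)))
    (by simpa [hT] using hk)
    (by intro i _; simp [T, ha i, hb i, hc i, hd i])
  refine ⟨i, j, hij, ?_⟩
  simp only [Prod.mk.injEq, ZMod.intCast_eq_intCast_iff_dvd_sub] at h
  obtain ⟨h2, h3, h5, h7⟩ := h
  push_cast at h2 h3 h5 h7
  omega

lemma plausible_congruentPairs {k : ℕ} (hk : 48 < k) : Plausible 2 k congruentPairs := by
  refine ⟨fun h hh t => ?_, fun h hh σ => ?_, fun x _ hx => ?_⟩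
  · simpa [congruentPairs] using hh
  · have hh' : (210 : ℤ) ∣ h 0 - h 1 := hh
    change (210 : ℤ) ∣ h (σ 0) - h (σ 1)
    have hne : σ 0 ≠ σ 1 := σ.injective.ne (by decide)
    generalize σ 0 = u at *
    generalize σ 1 = v at *
    fin_cases u <;> fin_cases v <;> simp at hne ⊢ <;> omega
  · obtain ⟨i, j, hij, h⟩ := hx.exists_ne_dvd_sub hk
    refine ⟨![i, j], ?_, by simpa [congruentPairs] using h⟩
    intro u v huv
    fin_cases u <;> fin_cases v <;> simp_all [eq_comm]

lemma boxCount_congruentPairs_le (N : ℕ) :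
    boxCount 2 congruentPairs N ≤ (2 * N + 1) * (2 * N / 210 + 1) := by
  let S : Finset (ℤ × ℤ) := Finset.Icc (-N : ℤ) N ×ˢ Finset.Icc (0 : ℤ) (2 * N / 210 : ℕ)
  have hS : S.card = (2 * N + 1) * (2 * N / 210 + 1) := by
    simp only [S, Finset.card_product, Int.card_Icc]
    congr 1 <;> omega
  rw [← hS, ← Nat.card_eq_finsetCard S]
  have hmem : ∀ h : {h : Fin 2 → ℤ // h ∈ congruentPairs ∧ ∀ i, |h i| ≤ (N : ℤ)},
      (h.1 0, (h.1 1 + N) / 210) ∈ S := by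
    rintro ⟨h, -, hb⟩
    have h0 := abs_le.1 (hb 0)
    have h1 := abs_le.1 (hb 1)
    simp only [S, Finset.mem_product, Finset.mem_Icc]
    omega
  refine Nat.card_le_card_of_injective (fun h => (⟨_, hmem h⟩ : S)) ?_
  rintro ⟨g, hg, _⟩ ⟨h, hh, _⟩ hgh
  have hg' : (210 : ℤ) ∣ g 0 - g 1 := hg
  have hh' : (210 : ℤ) ∣ h 0 - h 1 := hh
  simp only [Subtype.mk.injEq, Prod.mk.injEq] at hgh
  obtain ⟨e0, e1⟩ := hgh
  ext i
  fin_cases i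
  · exact e0
  · change g 1 = h 1
    omega

lemma lowerBoxDensity_congruentPairs_le : lowerBoxDensity 2 congruentPairs ≤ 1 / 210 := by
  have hinv : Tendsto (fun N : ℕ => ((N : ℝ))⁻¹) atTop (nhds 0) :=
    tendsto_inv_atTop_nhds_zero_nat
  have hlim : Tendsto (fun N : ℕ => (1 + (N : ℝ)⁻¹ / 2) * (1 / 210 + (N : ℝ)⁻¹ / 2)) atTop
      (nhds (1 / 210)) := by
    have := ((hinv.div_const 2).const_add 1).mul ((hinv.div_const 2).const_add (1 / 210))
    simpa using this
  rw [← hlim.liminf_eq]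
  refine liminf_le_liminf ?_ ⟨0, ?_⟩ hlim.isBoundedUnder_le.isCoboundedUnder_ge
  · filter_upwards [eventually_gt_atTop 0] with N hN
    have hN' : (0 : ℝ) < N := by exact_mod_cast hN
    have h1 : (boxCount 2 congruentPairs N : ℝ) ≤ (2 * N + 1) * ((2 * N / 210 : ℕ) + 1) := by
      exact_mod_cast boxCount_congruentPairs_le N
    have h2 : ((2 * N / 210 : ℕ) : ℝ) ≤ 2 * N / 210 := by
      simpa using Nat.cast_div_le (α := ℝ) (m := 2 * N) (n := 210)
    rw [div_le_iff₀ (by positivity)]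
    calc (boxCount 2 congruentPairs N : ℝ) ≤ (2 * N + 1) * (2 * N / 210 + 1) := by
          refine h1.trans ?_
          gcongr
      _ = _ := by field_simp
  · simp only [eventually_map]
    exact Eventually.of_forall fun N => by positivity

theorem stmt_8 : delta 2 50 ≤ 1 / 210 := by
  have hbdd : BddBelow {d : ℝ | ∃ A, Plausible 2 50 A ∧ d = lowerBoxDensity 2 A} := by
    refine ⟨0, ?_⟩
    rintro _ ⟨A, -, rfl⟩
    exact lowerBoxDensity_nonneg 2 A
  exact (csInf_le hbdd ⟨congruentPairs, plausible_congruentPairs (by norm_num), rfl⟩).trans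
    lowerBoxDensity_congruentPairs_le
end

section
/- Let ℓ ≥ 1 be an integer, let B be an admissible set of ℓ distinct integers, and let A ⊆ ℤ be a set with the property that for every integer t ∉ B such that B ∪ {t} is admissible, there exists b ∈ B with t − b ∈ A. Then the lower density of A is at least (1/ℓ) · ∏_{p ≤ ℓ+1, p prime} (1 − 1/p). -/
open Filter

/-- A set of integers is admissible if, for every prime `p`, its elements do not
cover all residue classes mod `p`. -/
def AdmissibleSet (B : Set ℤ) : Prop :=
  ∀ p : ℕ, p.Prime → ∃ r : ZMod p, ∀ b ∈ B, (b : ZMod p) ≠ r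

/-- The lower density of a set of integers: `liminf_{x → ∞} |A ∩ [1,x]| / x`. -/
noncomputable def lowerDensity (A : Set ℤ) : ℝ :=
  Filter.liminf (fun x : ℕ => (Nat.card (A ∩ Set.Icc 1 (x : ℤ) : Set ℤ) : ℝ) / x)
    Filter.atTop

/-- The upper density of a set of integers: `limsup_{x → ∞} |A ∩ [1,x]| / x`. -/
noncomputable def upperDensity (A : Set ℤ) : ℝ :=
  Filter.limsup (fun x : ℕ => (Nat.card (A ∩ Set.Icc 1 (x : ℤ) : Set ℤ) : ℝ) / x)
    Filter.atTop

/-- Any `q` consecutive blocks of length `a` contain exactly `q * φ a` integers coprime to `a`. -/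
theorem card_filter_coprime_Ico_mul (a n q : ℕ) :
    ((Finset.Ico n (n + a * q)).filter a.Coprime).card = q * a.totient := by
  induction q with
  | zero => simp
  | succ q ih =>
    have hsplit : Finset.Ico n (n + a * (q + 1)) =
        Finset.Ico n (n + a * q) ∪ Finset.Ico (n + a * q) (n + a * q + a) := by
      rw [Finset.Ico_union_Ico_eq_Ico (by omega) (by omega), mul_add, mul_one, add_assoc]
    rw [hsplit, Finset.filter_union, Finset.card_union_of_disjoint, ih,
      Nat.filter_coprime_Ico_eq_totient, add_mul, one_mul]
    exact Finset.disjoint_filter_filter (Finset.Ico_disjoint_Ico_consecutive _ _ _)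

/-- The totient of a product of distinct primes, as a real Euler product. -/
theorem totient_prod_primes (s : Finset ℕ) (hs : ∀ p ∈ s, p.Prime) :
    ((∏ p ∈ s, p).totient : ℝ) = ((∏ p ∈ s, p : ℕ) : ℝ) * ∏ p ∈ s, (1 - 1 / (p : ℝ)) := by
  have h := congrArg (fun x : ℚ => (x : ℝ)) (Nat.totient_eq_mul_prod_factors (∏ p ∈ s, p))
  rw [Nat.primeFactors_prod hs] at h
  simpa using h

/-- A set of integers with fewer than `p` elements misses a residue class mod `p`. -/
theorem exists_residue_of_card_lt (C : Finset ℤ) (p : ℕ) [NeZero p] (h : C.card < p) :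
    ∃ r : ZMod p, ∀ c ∈ C, (c : ZMod p) ≠ r := by
  by_contra! hcon
  have hsub : (Finset.univ : Finset (ZMod p)) ⊆ C.image (fun c : ℤ => (c : ZMod p)) := by
    intro r _
    obtain ⟨c, hc, hcr⟩ := hcon r
    exact Finset.mem_image.2 ⟨c, hc, hcr⟩
  have hcard := (Finset.card_le_card hsub).trans Finset.card_image_le
  rw [Finset.card_univ, ZMod.card] at hcard
  omega

/-- For an admissible `B` there is a shift `R` such that adjoining `R + s` keeps it admissible
whenever `s` is coprime to all primes up to `B.card + 1`. -/
theorem exists_shift_admissible (B : Finset ℤ) (hB : AdmissibleSet ↑B) :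
    ∃ R : ℕ, ∀ s : ℕ,
      (∏ p ∈ Finset.filter Nat.Prime (Finset.range (B.card + 2)), p).Coprime s →
        AdmissibleSet (insert ((R : ℤ) + s) (B : Set ℤ)) := by
  classical
  set S := Finset.filter Nat.Prime (Finset.range (B.card + 2))
  have hprime : ∀ p ∈ S, p.Prime := fun p hp => (Finset.mem_filter.1 hp).2
  have hres : ∀ p : ℕ, ∃ r : ℕ, p.Prime → ∀ b ∈ B, (b : ZMod p) ≠ r := by
    intro p
    by_cases hp : p.Prime
    · obtain ⟨r, hr⟩ := hB p hp
      have : NeZero p := ⟨hp.ne_zero⟩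
      exact ⟨r.val, fun _ b hb => by simpa using hr b hb⟩
    · exact ⟨0, fun h => absurd h hp⟩
  choose r hr using hres
  obtain ⟨R, hR⟩ := Nat.chineseRemainderOfFinset r id S (fun p hp => (hprime p hp).ne_zero)
    (fun p hp q hq hpq => (Nat.coprime_primes (hprime p hp) (hprime q hq)).2 hpq)
  refine ⟨R, fun s hs p hp => ?_⟩
  by_cases hpS : p ∈ S
  · refine ⟨r p, fun b hb => ?_⟩
    rcases hb with rfl | hb
    · have hRr : (R : ZMod p) = r p := (ZMod.natCast_eq_natCast_iff _ _ _).2 (hR p hpS)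
      have hps : ¬ p ∣ s := (Nat.Prime.coprime_iff_not_dvd hp).1
        (hs.coprime_dvd_left (Finset.dvd_prod_of_mem _ hpS))
      push_cast
      rw [hRr, Ne, add_eq_left, ZMod.natCast_eq_zero_iff]
      exact hps
    · exact hr p hp b hb
  · have : NeZero p := ⟨hp.ne_zero⟩
    have hlt : (insert ((R : ℤ) + s) B).card < p := by
      have h1 := Finset.card_insert_le ((R : ℤ) + s) B
      have h2 : ¬ p < B.card + 2 := fun h =>
        hpS (Finset.mem_filter.2 ⟨Finset.mem_range.2 h, hp⟩)
      omega
    obtain ⟨c, hc⟩ := exists_residue_of_card_lt _ p hlt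
    exact ⟨c, fun b hb => hc b (by simpa using hb)⟩

/-- If every element of a finite set `T` has a translate by some `-b`, `b ∈ B`, in the finite set
`D`, then `T` has at most `|B| * |D|` elements. -/
theorem card_le_mul_card_of_exists_sub_mem (T B D : Finset ℤ)
    (h : ∀ t ∈ T, ∃ b ∈ B, t - b ∈ D) : T.card ≤ B.card * D.card := by
  classical
  have hsub : T ⊆ (B ×ˢ D).image (fun x => x.1 + x.2) := by
    intro t ht
    obtain ⟨b, hb, hd⟩ := h t ht
    exact Finset.mem_image.2 ⟨(b, t - b), Finset.mem_product.2 ⟨hb, hd⟩, by simp⟩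
  calc T.card ≤ ((B ×ˢ D).image (fun x => x.1 + x.2)).card := Finset.card_le_card hsub
    _ ≤ (B ×ˢ D).card := Finset.card_image_le
    _ = B.card * D.card := Finset.card_product _ _

/-- A counting function at least `d * (x - K)` for all `x` forces lower density at least `d`. -/
theorem le_lowerDensity_of_linear_bound (A : Set ℤ) (d K : ℝ)
    (h : ∀ x : ℕ, d * (x - K) ≤ Nat.card (A ∩ Set.Icc 1 (x : ℤ) : Set ℤ)) :
    d ≤ lowerDensity A := by
  have hlim : Tendsto (fun x : ℕ => d - d * K / x) atTop (nhds d) := by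
    simpa using tendsto_const_nhds.sub (tendsto_const_div_atTop_nhds_zero_nat (d * K))
  have hle : ∀ᶠ x : ℕ in atTop, d - d * K / x ≤
      (Nat.card (A ∩ Set.Icc 1 (x : ℤ) : Set ℤ) : ℝ) / x := by
    filter_upwards [eventually_gt_atTop 0] with x hx
    have hx' : (0 : ℝ) < x := by exact_mod_cast hx
    rw [le_div_iff₀ hx', sub_mul, div_mul_cancel₀ _ hx'.ne', ← mul_sub]
    exact h x
  have hub : ∀ x : ℕ, (Nat.card (A ∩ Set.Icc 1 (x : ℤ) : Set ℤ) : ℝ) / x ≤ 1 := by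
    intro x
    refine div_le_one_of_le₀ ?_ x.cast_nonneg
    have hcard := Nat.card_mono (Set.finite_Icc (1 : ℤ) x)
      (Set.inter_subset_right : A ∩ Set.Icc 1 (x : ℤ) ⊆ _)
    have hIcc : Nat.card (Set.Icc (1 : ℤ) x) = x := by simp
    rw [hIcc] at hcard
    exact_mod_cast hcard
  rw [← hlim.liminf_eq]
  exact liminf_le_liminf hle hlim.isBoundedUnder_ge
    (isBoundedUnder_of ⟨1, hub⟩).isCoboundedUnder_ge

theorem stmt_9 (ℓ : ℕ) (hℓ : 1 ≤ ℓ) (B : Finset ℤ) (hBcard : B.card = ℓ)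
    (hBadm : AdmissibleSet ↑B) (A : Set ℤ)
    (hA : ∀ t : ℤ, t ∉ B → AdmissibleSet (insert t (B : Set ℤ)) → ∃ b ∈ B, t - b ∈ A) :
    (1 / ℓ : ℝ) * ∏ p ∈ Finset.filter Nat.Prime (Finset.range (ℓ + 2)), (1 - 1 / (p : ℝ)) ≤
      lowerDensity A := by
  classical
  subst hBcard
  obtain ⟨R, hR⟩ := exists_shift_admissible B hBadm
  set S := Finset.filter Nat.Prime (Finset.range (B.card + 2))
  set P := ∏ p ∈ S, p
  have hprime : ∀ p ∈ S, p.Prime := fun p hp => (Finset.mem_filter.1 hp).2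
  have hPpos : 0 < P := Finset.prod_pos fun p hp => (hprime p hp).pos
  set M := ∑ b ∈ B, b.natAbs
  have hbM : ∀ b ∈ B, b.natAbs ≤ M := fun b hb =>
    Finset.single_le_sum (f := Int.natAbs) (fun _ _ => Nat.zero_le _) hb
  refine le_lowerDensity_of_linear_bound A _ ((R + 3 * M + P : ℕ) : ℝ) fun x => ?_
  set q := (x - (R + 3 * M)) / P
  have hfin : (A ∩ Set.Icc 1 (x : ℤ)).Finite := (Set.finite_Icc _ _).inter_of_right _
  have hcount : q * P.totient ≤ B.card * Nat.card (A ∩ Set.Icc 1 (x : ℤ) : Set ℤ) := by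
    rw [← card_filter_coprime_Ico_mul P (2 * M + 1) q, Nat.card_eq_card_finite_toFinset hfin,
      ← Finset.card_image_of_injective _
        (fun a b (h : (R : ℤ) + (a : ℕ) = R + (b : ℕ)) => by omega)]
    refine card_le_mul_card_of_exists_sub_mem _ _ _ fun t ht => ?_
    obtain ⟨s, hs, rfl⟩ := Finset.mem_image.1 ht
    obtain ⟨hsI, hsP⟩ := Finset.mem_filter.1 hs
    rw [Finset.mem_Ico] at hsI
    have htB : (R : ℤ) + s ∉ B := fun hmem => by
      have := hbM _ hmem
      omega
    obtain ⟨b, hb, hbA⟩ := hA _ htB (hR s hsP)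
    refine ⟨b, hb, hfin.mem_toFinset.2 ⟨hbA, ?_⟩⟩
    have hbb := hbM b hb
    have hqP : P * q ≤ x - (R + 3 * M) := Nat.mul_div_le _ _
    have hqpos : P * q ≠ 0 := by omega
    rw [Set.mem_Icc]
    omega
  have hqx : (x : ℝ) - (R + 3 * M + P : ℕ) ≤ P * q := by
    have h1 : x - (R + 3 * M) < P * (q + 1) := Nat.lt_mul_div_succ _ hPpos
    rw [mul_add, mul_one] at h1
    have h2 : x ≤ P * q + (R + 3 * M + P) := by omega
    have h3 : (x : ℝ) ≤ P * q + (R + 3 * M + P : ℕ) := by exact_mod_cast h2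
    linarith
  have htot := totient_prod_primes S hprime
  have hcount' : (q : ℝ) * P.totient ≤ B.card * Nat.card (A ∩ Set.Icc 1 (x : ℤ) : Set ℤ) := by
    exact_mod_cast hcount
  have hdelta : 0 ≤ ∏ p ∈ S, (1 - 1 / (p : ℝ)) := Finset.prod_nonneg fun p hp =>
    sub_nonneg.2 (div_le_one_of_le₀ (by exact_mod_cast (hprime p hp).one_le) p.cast_nonneg)
  have hBpos : (0 : ℝ) < B.card := by exact_mod_cast hℓ
  rw [one_div_mul_eq_div, div_mul_eq_mul_div, div_le_iff₀' hBpos]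
  calc (∏ p ∈ S, (1 - 1 / (p : ℝ))) * (x - (R + 3 * M + P : ℕ))
      ≤ (∏ p ∈ S, (1 - 1 / (p : ℝ))) * (P * q) := mul_le_mul_of_nonneg_left hqx hdelta
    _ = q * P.totient := by rw [htot]; ring
    _ ≤ _ := hcount'
end

section
/- Let ℓ ≥ 2 and y be integers with 1 ≤ y ≤ ℓ−1. Then there exist an admissible set B of ℓ distinct integers and a set A ⊆ ℤ whose upper density is at most (1/(ℓ−y)) · ∏_{p ≤ y, p prime} (1 − 1/p), such that for every integer t ∉ B for which B ∪ {t} is admissible, there exists b ∈ B with t − b ∈ A. -/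
open Filter

lemma exists_lt_factorial_modEq_min (ℓ k : ℕ) :
    ∃ r < ℓ.factorial, ∀ p : ℕ, p.Prime → p ≤ ℓ → r ≡ min (k + 1) (p - 1) [MOD p] := by
  obtain ⟨r, hr⟩ := Nat.chineseRemainderOfFinset (fun p => min (k + 1) (p - 1)) id
    ((Finset.range (ℓ + 1)).filter Nat.Prime)
    (fun p hp => (Finset.mem_filter.1 hp).2.ne_zero)
    (fun p hp q hq hpq => by
      simp only [Finset.coe_filter, Set.mem_ofPred_eq] at hp hq
      exact (Nat.coprime_primes hp.2 hq.2).2 hpq)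
  refine ⟨r % ℓ.factorial, Nat.mod_lt _ ℓ.factorial_pos, fun p hp hpl => ?_⟩
  have hdvd : p ∣ ℓ.factorial := hp.dvd_factorial.2 hpl
  exact ((Nat.mod_modEq r _).of_dvd hdvd).trans
    (hr p (Finset.mem_filter.2 ⟨Finset.mem_range.2 (by omega), hp⟩))

lemma card_filter_coprime_range_mul_le (P Q : ℕ) (hP : 0 < P) :
    ((Finset.range (P * Q)).filter P.Coprime).card ≤ Q * P.totient := by
  have hsub : (Finset.range (P * Q)).filter P.Coprime ⊆
      (Finset.range Q ×ˢ (Finset.range P).filter P.Coprime).image fun a => P * a.1 + a.2 := by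
    intro u hu
    simp only [Finset.mem_filter, Finset.mem_range] at hu
    refine Finset.mem_image.2 ⟨(u / P, u % P), ?_, Nat.div_add_mod u P⟩
    simp only [Finset.mem_product, Finset.mem_filter, Finset.mem_range]
    refine ⟨Nat.div_lt_of_lt_mul hu.1, Nat.mod_lt _ hP, ?_⟩
    have h := hu.2
    rw [Nat.Coprime, Nat.gcd_comm, ← Nat.gcd_rec]
    exact h
  calc _ ≤ _ := (Finset.card_le_card hsub).trans Finset.card_image_le
    _ = Q * P.totient := by rw [Finset.card_product, Finset.card_range, Nat.totient]

lemma totient_factorial_eq (y : ℕ) :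
    (y.factorial.totient : ℝ) = y.factorial *
      ∏ p ∈ Finset.filter Nat.Prime (Finset.range (y + 1)), (1 - 1 / (p : ℝ)) := by
  have hpf : y.factorial.primeFactors = Finset.filter Nat.Prime (Finset.range (y + 1)) := by
    ext p
    simp only [Nat.mem_primeFactors, Finset.mem_filter, Finset.mem_range]
    constructor
    · rintro ⟨hp, hd, -⟩
      exact ⟨Nat.lt_succ_of_le (hp.dvd_factorial.1 hd), hp⟩
    · rintro ⟨hl, hp⟩
      exact ⟨hp, hp.dvd_factorial.2 (Nat.le_of_lt_succ hl), y.factorial_ne_zero⟩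
  have h := Nat.totient_eq_mul_prod_factors y.factorial
  rw [hpf] at h
  have h' := congrArg (fun q : ℚ => (q : ℝ)) h
  push_cast at h'
  simpa [one_div] using h'

lemma upperDensity_le_of_card_le (A : Set ℤ) (C M : ℕ) (hM : 0 < M)
    (h : ∀ x : ℕ, Nat.card (A ∩ Set.Icc 1 (x : ℤ) : Set ℤ) ≤ C * (x / M + 2)) :
    upperDensity A ≤ C / M := by
  have hlim : Tendsto (fun x : ℕ => (C : ℝ) / M + (2 * C : ℝ) / x) atTop (nhds ((C : ℝ) / M)) := by
    simpa using tendsto_const_nhds.add (tendsto_const_div_atTop_nhds_zero_nat (2 * C : ℝ))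
  rw [upperDensity, ← hlim.limsup_eq]
  refine limsup_le_limsup ?_ ?_ hlim.isBoundedUnder_le
  · filter_upwards [eventually_gt_atTop 0] with x hx
    have hx' : (0 : ℝ) < x := by exact_mod_cast hx
    have hM' : (0 : ℝ) < M := by exact_mod_cast hM
    rw [div_le_iff₀ hx']
    have h1 : ((Nat.card (A ∩ Set.Icc 1 (x : ℤ) : Set ℤ) : ℕ) : ℝ) ≤
        C * (((x / M : ℕ) : ℝ) + 2) := by
      exact_mod_cast h x
    have h2 : ((x / M : ℕ) : ℝ) ≤ x / M := Nat.cast_div_le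
    calc _ ≤ _ := h1
      _ ≤ (C : ℝ) * ((x : ℝ) / M + 2) := by gcongr
      _ = _ := by field_simp
  · exact IsBoundedUnder.isCoboundedUnder_le
      ⟨0, eventually_map.2 (Eventually.of_forall fun x => by positivity)⟩

lemma card_inter_Icc_le (P N m : ℕ) (hP : 0 < P) (hPN : P ∣ N) (hN : 0 < N) (hm : 0 < m) (x : ℕ) :
    Nat.card ({n : ℤ | IsCoprime (P : ℤ) (n + 1) ∧ (m : ℤ) ∣ (n + 1) / N} ∩
      Set.Icc 1 (x : ℤ) : Set ℤ) ≤ (N / P * P.totient) * (x / (N * m) + 2) := by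
  set S := (Finset.range (x / (N * m) + 2) ×ˢ (Finset.range N).filter P.Coprime).image
    fun a => ((N * (m * a.1) + a.2 : ℕ) : ℤ) - 1
  have hsub : {n : ℤ | IsCoprime (P : ℤ) (n + 1) ∧ (m : ℤ) ∣ (n + 1) / N} ∩
      Set.Icc 1 (x : ℤ) ⊆ (S : Set ℤ) := by
    rintro n ⟨⟨hc, hd⟩, h1, hx⟩
    obtain ⟨u, hu⟩ : ∃ u : ℕ, n + 1 = u := ⟨(n + 1).toNat, by omega⟩
    rw [hu] at hc hd
    have hc : P.Coprime u := Nat.isCoprime_iff_coprime.1 hc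
    obtain ⟨a, ha⟩ : m ∣ u / N := by exact_mod_cast hd
    refine Finset.mem_coe.2 (Finset.mem_image.2 ⟨(a, u % N), ?_, ?_⟩)
    · simp only [Finset.mem_product, Finset.mem_filter, Finset.mem_range]
      refine ⟨?_, Nat.mod_lt _ hN, ?_⟩
      · have hau : a = u / (N * m) := by
          rw [← Nat.div_div_eq_div_mul, ha, Nat.mul_div_cancel_left _ hm]
        have : u ≤ x + 1 := by omega
        have h2 : u / (N * m) ≤ (x + N * m) / (N * m) :=
          Nat.div_le_div_right (this.trans (by have := Nat.mul_pos hN hm; omega))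
        rw [Nat.add_div_right _ (Nat.mul_pos hN hm)] at h2
        omega
      · obtain ⟨c, rfl⟩ := hPN
        have : (u % (P * c)) % P = u % P := Nat.mod_mul_right_mod u P c
        rw [Nat.Coprime, Nat.gcd_comm, Nat.gcd_comm, Nat.gcd_rec, this, ← Nat.gcd_rec]
        exact hc
    · rw [← ha, Nat.div_add_mod]
      omega
  rw [Nat.card_coe_set_eq]
  calc _ ≤ S.card := by
        rw [← Set.ncard_coe_finset]
        exact Set.ncard_le_ncard hsub S.finite_toSet
    _ ≤ (x / (N * m) + 2) * ((Finset.range N).filter P.Coprime).card := by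
        refine Finset.card_image_le.trans ?_
        rw [Finset.card_product, Finset.card_range]
    _ ≤ (x / (N * m) + 2) * (N / P * P.totient) := by
        gcongr
        have := card_filter_coprime_range_mul_le P (N / P) hP
        rwa [Nat.mul_div_cancel' hPN] at this
    _ = _ := mul_comm _ _

theorem stmt_10 (ℓ y : ℕ) (hℓ : 2 ≤ ℓ) (hy : 1 ≤ y) (hyℓ : y ≤ ℓ - 1) :
    ∃ (B : Finset ℤ) (A : Set ℤ), B.card = ℓ ∧ AdmissibleSet ↑B ∧
      upperDensity A ≤
        (1 / (ℓ - y) : ℝ) * ∏ p ∈ Finset.filter Nat.Prime (Finset.range (y + 1)),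
          (1 - 1 / (p : ℝ)) ∧
      ∀ t : ℤ, t ∉ B → AdmissibleSet (insert t (B : Set ℤ)) → ∃ b ∈ B, t - b ∈ A := by
  choose r hrlt hr using exists_lt_factorial_modEq_min ℓ
  set N := ℓ.factorial
  have hNpos : 0 < N := ℓ.factorial_pos
  have hN2 : 1 < N := Nat.one_lt_factorial.2 (by omega)
  have hPN : y.factorial ∣ N := Nat.factorial_dvd_factorial (by omega)
  set m := ℓ - y with hm
  have hmpos : 0 < m := by omega
  let s : ℕ → ℕ := fun k => if k < y then r k else 1
  have hs : ∀ k, s k < N := fun k => by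
    by_cases hk : k < y <;> simp [s, hk, hrlt, hN2]
  let f : ℕ → ℤ := fun k => ((N * k + s k : ℕ) : ℤ)
  have hdiv : ∀ k, (N * k + s k) / N = k := fun k => by
    rw [Nat.mul_add_div hNpos, Nat.div_eq_of_lt (hs k), add_zero]
  have hf : Function.Injective f := fun i j hij => by
    have : N * i + s i = N * j + s j := Int.natCast_inj.1 hij
    rw [← hdiv i, this, hdiv j]
  have hfmod : ∀ p : ℕ, p.Prime → p ≤ ℓ → ∀ k,
      (f k : ZMod p) = (s k : ZMod p) := fun p hp hpl k => by
    have : (N : ZMod p) = 0 := (ZMod.natCast_eq_zero_iff _ _).2 (hp.dvd_factorial.2 hpl)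
    simp [f, this]
  have hsmod : ∀ p : ℕ, p.Prime → p ≤ ℓ → ∀ k < y,
      (s k : ZMod p) = ((min (k + 1) (p - 1) : ℕ) : ZMod p) := fun p hp hpl k hk => by
    simp only [s, hk, if_true]
    exact (ZMod.natCast_eq_natCast_iff _ _ _).2 (hr k p hp hpl)
  refine ⟨(Finset.range ℓ).image f,
    {n : ℤ | IsCoprime (y.factorial : ℤ) (n + 1) ∧ (m : ℤ) ∣ (n + 1) / N}, ?_, ?_, ?_, ?_⟩
  · rw [Finset.card_image_of_injective _ hf, Finset.card_range]
  · intro p hp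
    have := Fact.mk hp
    by_cases hpl : p ≤ ℓ
    · refine ⟨0, fun b hb => ?_⟩
      obtain ⟨k, -, rfl⟩ := Finset.mem_image.1 (Finset.mem_coe.1 hb)
      rw [hfmod p hp hpl]
      by_cases hk : k < y
      · rw [hsmod p hp hpl k hk, Ne, ZMod.natCast_eq_zero_iff]
        have := hp.two_le
        exact Nat.not_dvd_of_pos_of_lt (by omega) (by omega)
      · simp [s, hk]
    · by_contra! hcon
      have huniv : (Finset.univ : Finset (ZMod p)) ⊆
          ((Finset.range ℓ).image f).image (fun b : ℤ => (b : ZMod p)) := fun c _ => by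
        obtain ⟨b, hb, hbc⟩ := hcon c
        exact Finset.mem_image.2 ⟨b, Finset.mem_coe.1 hb, hbc⟩
      have hle := (Finset.card_le_card huniv).trans
        (Finset.card_image_le.trans Finset.card_image_le)
      rw [Finset.card_univ, ZMod.card, Finset.card_range] at hle
      exact hpl hle
  · refine (upperDensity_le_of_card_le _ _ (N * m) (Nat.mul_pos hNpos hmpos) fun x =>
      card_inter_Icc_le y.factorial N m y.factorial_pos hPN hNpos hmpos x).trans (le_of_eq ?_)
    have hP0 : (y.factorial : ℝ) ≠ 0 := by exact_mod_cast y.factorial_ne_zero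
    have hN0 : (N : ℝ) ≠ 0 := by exact_mod_cast hNpos.ne'
    have hm0 : (m : ℝ) ≠ 0 := by exact_mod_cast hmpos.ne'
    have hmc : (ℓ : ℝ) - y = m := by rw [hm, Nat.cast_sub (by omega)]
    rw [hmc, Nat.cast_mul, Nat.cast_mul, Nat.cast_div hPN hP0, totient_factorial_eq]
    field_simp
  · intro t _ ht
    have hcop : IsCoprime (y.factorial : ℤ) t := by
      rw [Int.isCoprime_iff_nat_coprime, Int.natAbs_natCast]
      refine Nat.Coprime.symm (Nat.coprime_of_dvd fun p hp hpt hpy => ?_)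
      have := Fact.mk hp
      have hpy : p ≤ y := hp.dvd_factorial.1 hpy
      obtain ⟨c, hc⟩ := ht p hp
      have ht0 : (t : ZMod p) = 0 :=
        (ZMod.intCast_zmod_eq_zero_iff_dvd _ _).2 (Int.natCast_dvd.2 hpt)
      have hc0 : c ≠ 0 := fun h => hc t (Set.mem_insert _ _) (ht0.trans h.symm)
      have hv0 : c.val ≠ 0 := (ZMod.val_eq_zero c).not.2 hc0
      have hvp : c.val < p := ZMod.val_lt c
      refine hc (f (c.val - 1)) (Set.mem_insert_of_mem _ (Finset.mem_coe.2
        (Finset.mem_image_of_mem f (Finset.mem_range.2 (by omega))))) ?_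
      rw [hfmod p hp (by omega), hsmod p hp (by omega) _ (by omega),
        show min (c.val - 1 + 1) (p - 1) = c.val by omega, ZMod.natCast_val, ZMod.cast_id]
    have hNz : (N : ℤ) ≠ 0 := by exact_mod_cast hNpos.ne'
    have hmz : (m : ℤ) ≠ 0 := by exact_mod_cast hmpos.ne'
    obtain ⟨j, hj⟩ : ∃ j : ℕ, (t / N - y) % m = j :=
      ⟨_, (Int.toNat_of_nonneg (Int.emod_nonneg _ hmz)).symm⟩
    have hjm : j < m := by
      have := Int.emod_lt_of_pos (t / N - y) (b := m) (by omega)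
      omega
    have hshift : t - f (y + j) + 1 = t + N * (-(y + j : ℤ)) := by
      simp only [f, s, show ¬ (y + j < y) by omega, if_false]
      push_cast
      ring
    refine ⟨f (y + j), Finset.mem_image_of_mem f (Finset.mem_range.2 (by omega)), ?_, ?_⟩
    · rw [hshift]
      obtain ⟨c, hc⟩ := hPN
      rw [hc, Nat.cast_mul, mul_assoc]
      exact hcop.add_mul_left_right _
    · rw [hshift, Int.add_mul_ediv_left _ _ hNz,
        show t / N + -(y + j : ℤ) = (t / N - y) - (t / N - y) % m by rw [hj]; ring]
      exact Int.dvd_self_sub_emod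
end
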